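/- arXiv:1810.04737 — 7 statements merged into one kernel-verified Lean document; each statement's English description precedes it below -/
import Mathlib

section
/- The six quadratic polynomials D₁, D₂, D₃, P₁₂, P₁₃, P₂₃, viewed as elements of the polynomial ring ℂ[a₁, b₁, c₁, d₁, a₂, b₂, c₂, d₂, a₃, b₃, c₃, d₃] in the twelve matrix entries, are algebraically independent over ℂ; in particular the ℂ-subalgebra they generate is a polynomial ring in six variables. (Ingredient of Proposition 2.8: M^{Θ-ss}_{(2,2)} ≅ ℙ⁵.) -/
open Matrix MvPolynomial

noncomputable section

/-- The polynomial ring `ℂ[a₁,b₁,c₁,d₁,a₂,b₂,c₂,d₂,a₃,b₃,c₃,d₃]` in the twelve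
entries of a triple of 2×2 matrices: variables are indexed by
`(i, (r, c))` with `i ∈ Fin 3` the index of the matrix and `(r, c)` the entry. -/
abbrev PolyRing : Type := MvPolynomial (Fin 3 × Fin 2 × Fin 2) ℂ

/-- The `i`-th generic 2×2 matrix, whose entries are the corresponding variables. -/
def genMat (i : Fin 3) : Matrix (Fin 2) (Fin 2) PolyRing :=
  fun r c => MvPolynomial.X (i, r, c)

/-- The six quadratic polynomials `D₁, D₂, D₃, P₁₂, P₁₃, P₂₃`. -/
def sixPolys : Fin 6 → PolyRing :=
  ![(genMat 0).det, (genMat 1).det, (genMat 2).det,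
    (genMat 0 + genMat 1).det - (genMat 0).det - (genMat 1).det,
    (genMat 0 + genMat 2).det - (genMat 0).det - (genMat 2).det,
    (genMat 1 + genMat 2).det - (genMat 1).det - (genMat 2).det]

/-- Every point of `ℂ⁶` with nonzero second coordinate is a value of the six polynomials. -/
lemma exists_sixPolys_eq (t : Fin 6 → ℂ) (ht : t 1 ≠ 0) :
    ∃ y : Fin 3 × Fin 2 × Fin 2 → ℂ, ∀ i, MvPolynomial.eval y (sixPolys i) = t i := by
  obtain ⟨s, hs⟩ := IsAlgClosed.exists_pow_nat_eq (discrim (t 1) (-(t 5)) (t 2)) (n := 2) (by norm_num)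
  obtain ⟨b, hb⟩ := exists_quadratic_eq_zero ht ⟨s, by rw [← hs, sq]⟩
  refine ⟨fun k => (![!![1, 0; 0, t 0], !![0, 1; -(t 1), t 3],
    !![0, b; b * t 1 - t 5, t 4]] k.1) k.2.1 k.2.2, fun i => ?_⟩
  fin_cases i <;> simp [sixPolys, genMat, Matrix.det_fin_two]
  all_goals first | done | linear_combination hb | linear_combination -hb | ring

/-- The six quadratic polynomials `D₁, D₂, D₃, P₁₂, P₁₃, P₂₃` in the twelve matrix
entries are algebraically independent over `ℂ`; in particular the `ℂ`-subalgebra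
they generate is a polynomial ring in six variables. -/
theorem sixPolys_algebraicIndependent :
    AlgebraicIndependent ℂ sixPolys := by
  rw [algebraicIndependent_iff]
  intro p hp
  have h : p * X 1 = 0 := by
    apply MvPolynomial.funext
    intro t
    by_cases ht : t 1 = 0
    · simp [ht]
    · obtain ⟨y, hy⟩ := exists_sixPolys_eq t ht
      have h1 := congrArg (MvPolynomial.aeval (R := ℂ) y) hp
      rw [MvPolynomial.comp_aeval_apply] at h1
      have h2 : (fun i => MvPolynomial.aeval (R := ℂ) y (sixPolys i)) = t := by
        funext i
        rw [← hy i, MvPolynomial.aeval_eq_eval]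
      rw [h2, MvPolynomial.aeval_eq_eval] at h1
      simp only [map_zero] at h1
      rw [map_mul, map_zero]
      erw [h1]
      simp
  exact (mul_eq_zero.mp h).resolve_right (MvPolynomial.X_ne_zero 1)
end
end

section
/- Let f ∈ ℂ[a₁, b₁, c₁, d₁, …, a₃, b₃, c₃, d₃] be a polynomial in the entries of a triple of 2×2 complex matrices such that for some non-negative integer r one has f(g₂Y₁g₁⁻¹, g₂Y₂g₁⁻¹, g₂Y₃g₁⁻¹) = det(g₁)⁻ʳ · det(g₂)ʳ · f(Y₁, Y₂, Y₃) for all invertible g₁, g₂ ∈ GL₂(ℂ) and all triples (Y₁, Y₂, Y₃). Then f belongs to the ℂ-subalgebra of the polynomial ring generated by the six polynomials D₁, D₂, D₃, P₁₂, P₁₃, P₂₃. (The generation statement used in the proof of Proposition 2.8, i.e., the ring of Θ-semi-invariants is generated by these six elements.) -/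
open Matrix MvPolynomial

noncomputable section

/-- 2×2 complex matrices. -/
abbrev M2 : Type := Matrix (Fin 2) (Fin 2) ℂ

/-- Evaluation of a polynomial in the twelve variables at a triple of matrices. -/
def evalAt (Y : Fin 3 → M2) (f : PolyRing) : ℂ :=
  MvPolynomial.eval (fun v : Fin 3 × Fin 2 × Fin 2 => Y v.1 v.2.1 v.2.2) f


theorem zero_of_mul_zero {σ : Type} (p q : MvPolynomial σ ℂ) (hq : q ≠ 0)
    (h : ∀ x, eval x q ≠ 0 → eval x p = 0) : p = 0 := by
  have : q * p = 0 := by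
    apply MvPolynomial.funext
    intro x
    by_cases hx : eval x q = 0
    · simp [hx]
    · simp [h x hx]
  exact (mul_eq_zero.mp this).resolve_left hq

/-- Substituting the elementary symmetric functions of the first two variables. -/
def esub (x : Fin 5 → ℂ) : Fin 5 → ℂ := ![x 0 + x 1, x 0 * x 1, x 2, x 3, x 4]

def esubPoly : Fin 5 → MvPolynomial (Fin 5) ℂ := ![X 0 + X 1, X 0 * X 1, X 2, X 3, X 4]

theorem eval_bind {σ τ : Type} (s : σ → MvPolynomial τ ℂ) (p : MvPolynomial σ ℂ) (x : τ → ℂ) :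
    eval x (bind₁ s p) = eval (fun i => eval x (s i)) p := by
  change (eval₂Hom (RingHom.id ℂ) x) (bind₁ s p) = (eval₂Hom (RingHom.id ℂ) _) p
  rw [MvPolynomial.eval₂Hom_bind₁]
  rfl

theorem eval_esub (p : MvPolynomial (Fin 5) ℂ) (x : Fin 5 → ℂ) :
    eval x (bind₁ esubPoly p) = eval (esub x) p := by
  rw [eval_bind]
  congr 2
  funext i
  fin_cases i <;> simp [esubPoly, esub]

theorem split_sym (h : MvPolynomial (Fin 5) ℂ) : ∃ A B : MvPolynomial (Fin 5) ℂ,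
    ∀ x, eval x h = eval (esub x) A + x 0 * eval (esub x) B := by
  induction h using MvPolynomial.induction_on with
  | C a => exact ⟨C a, 0, by simp⟩
  | add p q hp hq =>
    obtain ⟨A, B, h1⟩ := hp
    obtain ⟨A', B', h2⟩ := hq
    refine ⟨A + A', B + B', fun x => ?_⟩
    simp only [map_add, h1, h2]; ring
  | mul_X p i hp =>
    obtain ⟨A, B, h1⟩ := hp
    have key : ∀ j : Fin 5, 2 ≤ j → ∃ A' B' : MvPolynomial (Fin 5) ℂ,
        ∀ x, eval x (p * X j) = eval (esub x) A' + x 0 * eval (esub x) B' := by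
      intro j hj
      refine ⟨A * X j, B * X j, fun x => ?_⟩
      have : esub x j = x j := by
        fin_cases j <;> simp_all [esub]
      simp only [map_mul, h1, eval_X, this]; ring
    fin_cases i
    · refine ⟨- X 1 * B, A + X 0 * B, fun x => ?_⟩
      simp [h1, esub]; ring
    · refine ⟨X 0 * A + X 1 * B, -A, fun x => ?_⟩
      simp [h1, esub]; ring
    · exact key 2 (by decide)
    · exact key 3 (by decide)
    · exact key 4 (by decide)

theorem sym_lemma (h : MvPolynomial (Fin 5) ℂ)
    (hs : ∀ x : Fin 5 → ℂ, eval ![x 1, x 0, x 2, x 3, x 4] h = eval x h) :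
    ∃ H : MvPolynomial (Fin 5) ℂ, ∀ x, eval x h = eval (esub x) H := by
  obtain ⟨A, B, hAB⟩ := split_sym h
  refine ⟨A, fun x => ?_⟩
  have hB : bind₁ esubPoly B = 0 := by
    apply zero_of_mul_zero _ (X 0 - X 1 : MvPolynomial (Fin 5) ℂ)
    · intro h0
      have := congrArg (eval (![1, 0, 0, 0, 0] : Fin 5 → ℂ)) h0
      simp at this
    · intro y hy
      have e := hs y
      rw [hAB, hAB] at e
      have : esub ![y 1, y 0, y 2, y 3, y 4] = esub y := by
        funext i
        fin_cases i <;> simp [esub] <;> ring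
      rw [this] at e
      rw [eval_esub]
      simp only [map_sub, eval_X] at hy
      simp only [Matrix.cons_val_zero] at e
      have : (y 0 - y 1) * eval (esub y) B = 0 := by linear_combination -e
      exact (mul_eq_zero.mp this).resolve_left hy
  rw [hAB, ← eval_esub B, hB]; simp

/-- homogenization -/
theorem homog (H : MvPolynomial (Fin 5) ℂ) : ∃ (N : ℕ) (G : MvPolynomial (Fin 6) ℂ),
    ∀ (δ : ℂ) (x : Fin 5 → ℂ),
      δ ^ N * eval x H = eval (Fin.cons δ (fun i => δ * x i) : Fin 6 → ℂ) G := by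
  induction H using MvPolynomial.induction_on with
  | C a => exact ⟨0, C a, by simp⟩
  | add p q hp hq =>
    obtain ⟨N, G, h1⟩ := hp
    obtain ⟨M, G', h2⟩ := hq
    refine ⟨N + M, X 0 ^ M * G + X 0 ^ N * G', fun δ x => ?_⟩
    simp only [map_add, map_mul, map_pow, eval_X, Fin.cons_zero, ← h1, ← h2]; ring
  | mul_X p i hp =>
    obtain ⟨N, G, h1⟩ := hp
    refine ⟨N + 1, G * X i.succ, fun δ x => ?_⟩
    simp only [map_mul, eval_X, Fin.cons_succ, ← h1]; ring

def pol (A B : M2) : ℂ := (A + B).det - A.det - B.det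

/-- order: D1, P12, D2, P13, D3, P23 -/
def qv (Y : Fin 3 → M2) : Fin 6 → ℂ :=
  ![(Y 0).det, pol (Y 0) (Y 1), (Y 1).det, pol (Y 0) (Y 2), (Y 2).det, pol (Y 1) (Y 2)]

def qPoly : Fin 6 → PolyRing :=
  ![(genMat 0).det, (genMat 0 + genMat 1).det - (genMat 0).det - (genMat 1).det, (genMat 1).det,
    (genMat 0 + genMat 2).det - (genMat 0).det - (genMat 2).det, (genMat 2).det,
    (genMat 1 + genMat 2).det - (genMat 1).det - (genMat 2).det]

theorem evalAt_q (Y : Fin 3 → M2) (i : Fin 6) : evalAt Y (qPoly i) = qv Y i := by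
  fin_cases i <;> simp [evalAt, qPoly, qv, pol, genMat, Matrix.det_fin_two]

theorem evalAt_bind (Y : Fin 3 → M2) (G : MvPolynomial (Fin 6) ℂ) :
    evalAt Y (bind₁ qPoly G) = eval (qv Y) G := by
  unfold evalAt
  rw [eval_bind]
  congr 2
  funext i
  exact evalAt_q Y i

theorem poly_ext (f g : PolyRing) (h : ∀ Y, evalAt Y f = evalAt Y g) : f = g := by
  apply MvPolynomial.funext
  intro x
  exact h (fun i r c => x (i, r, c))

theorem eq_of_generic (f g q : PolyRing) (hq : ∃ Y, evalAt Y q ≠ 0)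
    (h : ∀ Y, evalAt Y q ≠ 0 → evalAt Y f = evalAt Y g) : f = g := by
  rw [← sub_eq_zero]
  apply zero_of_mul_zero _ q
  · rintro rfl
    obtain ⟨Y, hY⟩ := hq
    simp [evalAt] at hY
  · intro x hx
    have := h (fun i r c => x (i, r, c)) hx
    rw [map_sub, sub_eq_zero]
    exact this

theorem split_zero (G : MvPolynomial (Fin 6) ℂ) : ∃ G1 : MvPolynomial (Fin 6) ℂ,
    ∀ x, eval x G = eval (Function.update x 0 0) G + x 0 * eval x G1 := by
  induction G using MvPolynomial.induction_on with
  | C a => exact ⟨0, by simp⟩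
  | add p q hp hq =>
    obtain ⟨A, h1⟩ := hp
    obtain ⟨B, h2⟩ := hq
    refine ⟨A + B, fun x => ?_⟩
    simp only [map_add]
    rw [h1, h2]; ring
  | mul_X p i hp =>
    obtain ⟨A, h1⟩ := hp
    by_cases hi : i = 0
    · subst hi
      exact ⟨p, fun x => by simp; ring⟩
    · refine ⟨A * X i, fun x => ?_⟩
      simp only [map_mul, eval_X, Function.update_of_ne hi]
      rw [h1]; ring

theorem update_zero (G : MvPolynomial (Fin 6) ℂ)
    (h : ∀ Y : Fin 3 → M2, (Y 0).det = 0 → eval (qv Y) G = 0) (x : Fin 6 → ℂ) :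
    eval (Function.update x 0 0) G = 0 := by
  have hz : bind₁ (Function.update X 0 0 : Fin 6 → MvPolynomial (Fin 6) ℂ) G = 0 := by
    apply zero_of_mul_zero _ (X 3 : MvPolynomial (Fin 6) ℂ) (X_ne_zero _)
    intro y hy
    rw [eval_X] at hy
    rw [eval_bind]
    have := h ![!![1, 0; 0, 0], !![0, 1; -y 2, y 1],
      !![y 4 / y 3, 0; y 4 / y 3 * y 1 - y 5, y 3]] (by simp)
    convert this using 2
    congr 1
    funext i
    fin_cases i <;> simp [qv, pol, Matrix.det_fin_two] <;> field_simp <;> ring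
  have := congrArg (eval x) hz
  rw [eval_bind] at this
  simp only [map_zero] at this
  refine Eq.trans ?_ this
  congr 2
  funext i
  by_cases hi : i = 0
  · subst hi; simp
  · simp [Function.update_of_ne hi]

theorem descent (N : ℕ) (f : PolyRing) : ∀ (G : MvPolynomial (Fin 6) ℂ),
    (∀ Y, (Y 0).det ^ N * evalAt Y f = eval (qv Y) G) →
    ∃ G' : MvPolynomial (Fin 6) ℂ, ∀ Y, evalAt Y f = eval (qv Y) G' := by
  induction N with
  | zero => exact fun G h => ⟨G, fun Y => by rw [← h]; simp⟩
  | succ N ih =>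
    intro G h
    obtain ⟨G1, hG1⟩ := split_zero G
    have h0 := update_zero G (fun Y hY => by rw [← h, hY]; simp)
    apply ih G1
    have e0 : ∀ Y, evalAt Y (genMat 0).det = (Y 0).det := fun Y => evalAt_q Y 0
    have : (genMat 0).det ^ N * f = bind₁ qPoly G1 := by
      apply eq_of_generic _ _ (genMat 0).det
      · exact ⟨fun _ => 1, by rw [e0]; simp⟩
      · intro Y hY
        rw [evalAt_bind]
        have h2 := h Y
        rw [hG1, h0] at h2
        rw [e0] at hY
        have e1 : evalAt Y ((genMat 0).det ^ N * f) = (Y 0).det ^ N * evalAt Y f := by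
          rw [← e0]; simp only [evalAt, map_mul, map_pow]
        rw [e1]
        apply mul_left_cancel₀ hY
        have e2 : qv Y 0 = (Y 0).det := rfl
        rw [e2] at h2
        linear_combination h2
    intro Y
    rw [← evalAt_bind, ← this, ← e0]
    simp only [evalAt, map_mul, map_pow]

/-- The (multivalued) section. -/
def sec (x : Fin 5 → ℂ) : Fin 3 → M2 :=
  ![1, !![x 0, x 0 * x 2 - x 4; 0, x 1], !![0, -x 3; 1, x 2]]

def secPoly : Fin 3 → Matrix (Fin 2) (Fin 2) (MvPolynomial (Fin 5) ℂ) :=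
  ![1, !![X 0, X 0 * X 2 - X 4; 0, X 1], !![0, -X 3; 1, X 2]]

theorem eval_sec (f : PolyRing) (x : Fin 5 → ℂ) :
    eval x (bind₁ (fun v : Fin 3 × Fin 2 × Fin 2 => secPoly v.1 v.2.1 v.2.2) f)
      = evalAt (sec x) f := by
  rw [eval_bind, evalAt]
  congr 2
  funext ⟨i, r, c⟩
  fin_cases i <;> fin_cases r <;> fin_cases c <;> simp [sec, secPoly]

theorem transport (f : PolyRing) (r : ℕ)
    (hf : ∀ g₁ g₂ : M2, IsUnit g₁.det → IsUnit g₂.det → ∀ Y : Fin 3 → M2,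
      evalAt (fun i => g₂ * Y i * g₁⁻¹) f =
        ((g₁.det)⁻¹) ^ r * (g₂.det) ^ r * evalAt Y f)
    (Y S : Fin 3 → M2) (T U : M2) (hT : T.det ≠ 0) (hU : U.det ≠ 0)
    (h : ∀ i, Y i * T = U * S i) :
    U.det ^ r * evalAt S f = T.det ^ r * evalAt Y f := by
  have hT' : IsUnit T.det := hT.isUnit
  have hU' : IsUnit U.det := hU.isUnit
  have := hf T⁻¹ U⁻¹ (by simpa [Matrix.det_nonsing_inv] using hT)
    (by simpa [Matrix.det_nonsing_inv] using hU) Y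
  have e : (fun i => U⁻¹ * Y i * T⁻¹⁻¹) = S := by
    funext i
    rw [Matrix.nonsing_inv_nonsing_inv _ hT', mul_assoc, h i, ← mul_assoc,
      Matrix.nonsing_inv_mul _ hU', one_mul]
  rw [e] at this
  rw [this, Matrix.det_nonsing_inv, Matrix.det_nonsing_inv]
  simp only [Ring.inverse_eq_inv', inv_inv]
  have : U.det ^ r * (U.det⁻¹) ^ r = 1 := by
    rw [← mul_pow, mul_inv_cancel₀ hU, one_pow]
  linear_combination (T.det ^ r * evalAt Y f) * this

theorem sec_symm (f : PolyRing) (r : ℕ)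
    (hf : ∀ g₁ g₂ : M2, IsUnit g₁.det → IsUnit g₂.det → ∀ Y : Fin 3 → M2,
      evalAt (fun i => g₂ * Y i * g₁⁻¹) f =
        ((g₁.det)⁻¹) ^ r * (g₂.det) ^ r * evalAt Y f) (x : Fin 5 → ℂ)
    (hx : (x 0 * x 2 - x 4) * (x 1 * x 2 - x 4) + x 3 * (x 0 - x 1) ^ 2 ≠ 0) :
    evalAt (sec ![x 1, x 0, x 2, x 3, x 4]) f = evalAt (sec x) f := by
  let T : M2 := !![x 0 * x 2 - x 4, x 3 * (x 0 - x 1); x 1 - x 0, x 1 * x 2 - x 4]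
  have hT : T.det ≠ 0 := by
    simp only [T, Matrix.det_fin_two_of]
    convert hx using 1; ring
  have := transport f r hf (sec x) (sec ![x 1, x 0, x 2, x 3, x 4]) T T hT hT (by
    intro i
    ext a b
    fin_cases i <;> fin_cases a <;> fin_cases b <;>
      simp [sec, T, Matrix.mul_apply, Fin.sum_univ_two] <;> ring)
  exact mul_left_cancel₀ (pow_ne_zero r hT) this

theorem exists_H (f : PolyRing) (r : ℕ)
    (hf : ∀ g₁ g₂ : M2, IsUnit g₁.det → IsUnit g₂.det → ∀ Y : Fin 3 → M2,
      evalAt (fun i => g₂ * Y i * g₁⁻¹) f =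
        ((g₁.det)⁻¹) ^ r * (g₂.det) ^ r * evalAt Y f) :
    ∃ H : MvPolynomial (Fin 5) ℂ, ∀ x, evalAt (sec x) f = eval (esub x) H := by
  set h := bind₁ (fun v : Fin 3 × Fin 2 × Fin 2 => secPoly v.1 v.2.1 v.2.2) f with hh
  obtain ⟨H, hH⟩ := sym_lemma h (by
    let s : Fin 5 → MvPolynomial (Fin 5) ℂ := ![X 1, X 0, X 2, X 3, X 4]
    have hs : ∀ x : Fin 5 → ℂ, eval x (bind₁ s h) = eval ![x 1, x 0, x 2, x 3, x 4] h := by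
      intro x
      rw [eval_bind]
      congr 2
      funext i
      fin_cases i <;> simp [s]
    have : bind₁ s h - h = 0 := by
      apply zero_of_mul_zero _ ((X 0 * X 2 - X 4) * (X 1 * X 2 - X 4) + X 3 * (X 0 - X 1) ^ 2 :
        MvPolynomial (Fin 5) ℂ)
      · intro h0
        have := congrArg (eval (![1, 0, 0, 1, 0] : Fin 5 → ℂ)) h0
        simp at this
      · intro x hx
        rw [map_sub, hs, hh, eval_sec, eval_sec, sub_eq_zero]
        apply sec_symm f r hf
        simpa using hx
    intro x
    rw [← hs, sub_eq_zero.mp this])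
  exact ⟨H, fun x => by rw [← hH, hh, eval_sec]⟩

theorem generic_norm (f : PolyRing) (r : ℕ)
    (hf : ∀ g₁ g₂ : M2, IsUnit g₁.det → IsUnit g₂.det → ∀ Y : Fin 3 → M2,
      evalAt (fun i => g₂ * Y i * g₁⁻¹) f =
        ((g₁.det)⁻¹) ^ r * (g₂.det) ^ r * evalAt Y f)
    (H : MvPolynomial (Fin 5) ℂ) (hH : ∀ x, evalAt (sec x) f = eval (esub x) H)
    (Z A B : M2) (hZ : Z.det ≠ 0) (hAB : (A * B - B * A).det ≠ 0) :
    evalAt ![Z, Z * A, Z * B] f =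
      Z.det ^ r * eval ![A.trace, A.det, B.trace, B.det, pol A B] H := by
  obtain ⟨l, hl⟩ := Module.End.exists_eigenvalue (Matrix.toLin' A)
  obtain ⟨v, hv⟩ := hl.exists_hasEigenvector
  have hv0 : v ≠ 0 := hv.2
  have hAv : A *ᵥ v = l • v := by simpa using hv.apply_eq_smul
  have hdet : (A - l • (1 : M2)).det = 0 := by
    apply Matrix.exists_mulVec_eq_zero_iff.mp
    exact ⟨v, hv0, by rw [Matrix.sub_mulVec, hAv]; simp [Matrix.smul_mulVec]⟩
  have a0 := congrFun hAv 0
  have a1 := congrFun hAv 1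
  simp [Matrix.mulVec, dotProduct, Fin.sum_univ_two] at a0 a1
  simp [Matrix.det_fin_two] at hdet
  let w := B *ᵥ v
  let T : M2 := !![v 0, w 0; v 1, w 1]
  have w0 : w 0 = B 0 0 * v 0 + B 0 1 * v 1 := by
    simp [w, Matrix.mulVec, dotProduct, Fin.sum_univ_two]
  have w1 : w 1 = B 1 0 * v 0 + B 1 1 * v 1 := by
    simp [w, Matrix.mulVec, dotProduct, Fin.sum_univ_two]
  have hT : T.det ≠ 0 := by
    intro h0
    simp only [T, Matrix.det_fin_two_of] at h0
    apply hAB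
    obtain ⟨c, hc⟩ : ∃ c : ℂ, w = c • v := by
      by_cases h00 : v 0 = 0
      · have h1 : v 1 ≠ 0 := fun h1 => hv0 (by funext i; fin_cases i <;> simp [h00, h1])
        refine ⟨w 1 / v 1, ?_⟩
        funext i
        fin_cases i
        · simp; field_simp; linear_combination -h0
        · simp; field_simp
      · refine ⟨w 0 / v 0, ?_⟩
        funext i
        fin_cases i
        · simp; field_simp
        · simp; field_simp; linear_combination h0
    apply Matrix.exists_mulVec_eq_zero_iff.mp
    refine ⟨v, hv0, ?_⟩
    rw [Matrix.sub_mulVec, ← Matrix.mulVec_mulVec, ← Matrix.mulVec_mulVec, hAv]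
    change A *ᵥ w - _ = 0
    rw [hc, Matrix.mulVec_smul, Matrix.mulVec_smul, hAv]
    change _ - l • w = 0
    rw [hc, smul_comm, sub_self]
  let x : Fin 5 → ℂ := ![l, A.trace - l, B.trace, B.det, pol A B]
  have hx : esub x = ![A.trace, A.det, B.trace, B.det, pol A B] := by
    funext i
    fin_cases i <;> simp [esub, x]
    simp [Matrix.det_fin_two, Matrix.trace_fin_two]
    linear_combination -hdet
  rw [← hx, ← hH]
  have hU : (Z * T).det ≠ 0 := by rw [Matrix.det_mul]; exact mul_ne_zero hZ hT
  have hA : A * T = T * !![x 0, x 0 * x 2 - x 4; 0, x 1] := by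
    ext a b
    fin_cases a <;> fin_cases b <;>
      simp [T, x, Matrix.mul_apply, Fin.sum_univ_two, pol, Matrix.det_fin_two,
        Matrix.trace_fin_two, w0, w1]
    · linear_combination a0
    · linear_combination B 1 1 * a0 - B 0 1 * a1
    · linear_combination a1
    · linear_combination B 0 0 * a1 - B 1 0 * a0
  have hB : B * T = T * !![0, -x 3; 1, x 2] := by
    ext a b
    fin_cases a <;> fin_cases b <;>
      simp [T, x, Matrix.mul_apply, Fin.sum_univ_two, Matrix.det_fin_two,
        Matrix.trace_fin_two, w0, w1] <;> ring
  have := transport f r hf ![Z, Z * A, Z * B] (sec x) T (Z * T) hT hU (by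
    intro i
    fin_cases i
    · simp [sec]
    · simp [sec, mul_assoc, hA]
    · simp [sec, mul_assoc, hB])
  rw [Matrix.det_mul, mul_pow] at this
  apply mul_left_cancel₀ (pow_ne_zero r hT)
  linear_combination -this

theorem main_generic (f : PolyRing) (r : ℕ)
    (hf : ∀ g₁ g₂ : M2, IsUnit g₁.det → IsUnit g₂.det → ∀ Y : Fin 3 → M2,
      evalAt (fun i => g₂ * Y i * g₁⁻¹) f =
        ((g₁.det)⁻¹) ^ r * (g₂.det) ^ r * evalAt Y f) :
    ∃ G : MvPolynomial (Fin 6) ℂ, ∀ Y, evalAt Y f = eval (qv Y) G := by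
  obtain ⟨H, hH⟩ := exists_H f r hf
  obtain ⟨N, G, hG⟩ := homog H
  apply descent N f (X 0 ^ r * G)
  have e0 : ∀ Y, evalAt Y (genMat 0).det = (Y 0).det := fun Y => evalAt_q Y 0
  have key : (genMat 0).det ^ N * f = bind₁ qPoly (X 0 ^ r * G) := by
    let q : PolyRing := (genMat 0).det *
      ((genMat 0).adjugate * genMat 1 * ((genMat 0).adjugate * genMat 2)
        - (genMat 0).adjugate * genMat 2 * ((genMat 0).adjugate * genMat 1)).det
    have hq : ∀ Y, evalAt Y q = (Y 0).det *
      ((Y 0).adjugate * Y 1 * ((Y 0).adjugate * Y 2)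
        - (Y 0).adjugate * Y 2 * ((Y 0).adjugate * Y 1)).det := by
      intro Y
      have hm : ∀ i, (eval (fun v : Fin 3 × Fin 2 × Fin 2 => Y v.1 v.2.1 v.2.2)).mapMatrix
          (genMat i) = Y i := by
        intro i
        ext a b
        simp [genMat]
      simp only [q, evalAt, map_mul, RingHom.map_det, map_sub, RingHom.map_adjugate, hm]
    apply eq_of_generic _ _ q
    · refine ⟨![1, !![0, 1; 0, 0], !![0, 0; 1, 0]], ?_⟩
      rw [hq]
      simp [Matrix.det_fin_two]
    · intro Y hY
      rw [hq] at hY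
      have hD := left_ne_zero_of_mul hY
      have hC := right_ne_zero_of_mul hY
      obtain ⟨A, hA⟩ : ∃ A, Y 1 = Y 0 * A := ⟨(Y 0)⁻¹ * Y 1, by
        rw [← mul_assoc, Matrix.mul_nonsing_inv _ hD.isUnit, one_mul]⟩
      obtain ⟨B, hB⟩ : ∃ B, Y 2 = Y 0 * B := ⟨(Y 0)⁻¹ * Y 2, by
        rw [← mul_assoc, Matrix.mul_nonsing_inv _ hD.isUnit, one_mul]⟩
      have hYe : Y = ![Y 0, Y 0 * A, Y 0 * B] := by
        funext i; fin_cases i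
        · rfl
        · exact hA
        · exact hB
      generalize hZ : Y 0 = Z at *
      have hAB : (A * B - B * A).det ≠ 0 := by
        intro h0
        apply hC
        rw [hA, hB, ← mul_assoc Z.adjugate, ← mul_assoc Z.adjugate, Matrix.adjugate_mul]
        simp only [Matrix.smul_mul, Matrix.mul_smul, one_mul, ← smul_sub, Matrix.det_smul, h0,
          mul_zero]
      have hn := generic_norm f r hf H hH Z A B hD hAB
      rw [← hYe] at hn
      rw [evalAt_bind]
      have e1 : evalAt Y ((genMat 0).det ^ N * f) = Z.det ^ N * evalAt Y f := by
        rw [← hZ, ← e0]; simp only [evalAt, map_mul, map_pow]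
      have e2 : qv Y = Fin.cons Z.det
          (fun i => Z.det * (![A.trace, A.det, B.trace, B.det, pol A B] : Fin 5 → ℂ) i) := by
        have e3 : (Fin.cons Z.det
          (fun i => Z.det * (![A.trace, A.det, B.trace, B.det, pol A B] : Fin 5 → ℂ) i) :
            Fin 6 → ℂ) = ![Z.det, Z.det * A.trace, Z.det * A.det, Z.det * B.trace,
              Z.det * B.det, Z.det * pol A B] := by
          funext i
          fin_cases i <;> rfl
        rw [hYe, e3]
        funext i
        fin_cases i <;> simp [qv, pol, Matrix.det_fin_two, Matrix.trace_fin_two,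
          Matrix.mul_apply, Fin.sum_univ_two] <;> ring
      rw [e1, hn, map_mul, e2, ← hG]
      simp only [map_pow, eval_X, Fin.cons_zero]
      ring
  intro Y
  rw [← evalAt_bind, ← key, ← e0]
  simp only [evalAt, map_mul, map_pow]

/-- Any polynomial `f` in the twelve matrix entries which is a semi-invariant of
weight `rΘ` for `Θ = (-1,1)`, i.e. satisfies
`f(g₂Y₁g₁⁻¹, g₂Y₂g₁⁻¹, g₂Y₃g₁⁻¹) = det(g₁)⁻ʳ det(g₂)ʳ f(Y₁,Y₂,Y₃)` for all
invertible `g₁, g₂` and all triples `Y`, lies in the `ℂ`-subalgebra generated by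
the six polynomials `D₁, D₂, D₃, P₁₂, P₁₃, P₂₃`. -/
theorem semiInvariants_mem_adjoin (f : PolyRing) (r : ℕ)
    (hf : ∀ g₁ g₂ : M2, IsUnit g₁.det → IsUnit g₂.det → ∀ Y : Fin 3 → M2,
      evalAt (fun i => g₂ * Y i * g₁⁻¹) f =
        ((g₁.det)⁻¹) ^ r * (g₂.det) ^ r * evalAt Y f) :
    f ∈ Algebra.adjoin ℂ
      ({(genMat 0).det, (genMat 1).det, (genMat 2).det,
        (genMat 0 + genMat 1).det - (genMat 0).det - (genMat 1).det,
        (genMat 0 + genMat 2).det - (genMat 0).det - (genMat 2).det,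
        (genMat 1 + genMat 2).det - (genMat 1).det - (genMat 2).det} :
        Set PolyRing) := by
  obtain ⟨G, hG⟩ := main_generic f r hf
  have hfe : f = bind₁ qPoly G := poly_ext _ _ (fun Y => by rw [evalAt_bind, hG])
  rw [hfe]
  have hmem : bind₁ qPoly G ∈ Algebra.adjoin ℂ (Set.range qPoly) := by
    rw [Algebra.adjoin_range_eq_range_aeval]
    exact ⟨G, rfl⟩
  refine Algebra.adjoin_mono ?_ hmem
  rintro _ ⟨i, rfl⟩
  fin_cases i <;> simp [qPoly]
end
end

section
/- Let Y₁, Y₂, Y₃ be 2×2 complex matrices such that det(λ₁Y₁ + λ₂Y₂ + λ₃Y₃) = 0 for every (λ₁, λ₂, λ₃) ∈ ℂ³. Then either there exists a nonzero vector v ∈ ℂ² with Y₁v = Y₂v = Y₃v = 0, or there exists a one-dimensional subspace L ⊆ ℂ² containing range Y₁ + range Y₂ + range Y₃. (The linear-algebra fact underlying the identification of the semistable locus in Proposition 2.8: a net of everywhere-singular 2×2 matrices has a common kernel vector or a common image line.) -/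
open Matrix

noncomputable section

/-- Parallel vectors in the plane. -/
def Par (p q : Fin 2 → ℂ) : Prop := p 0 * q 1 = p 1 * q 0

lemma Par.smul {p q : Fin 2 → ℂ} (hp : p ≠ 0) (h : Par p q) : ∃ k : ℂ, q = k • p := by
  unfold Par at h
  by_cases h0 : p 0 = 0
  · have h1 : p 1 ≠ 0 := by
      intro h1
      apply hp
      ext i
      fin_cases i <;> simp [h0, h1]
    refine ⟨q 1 / p 1, ?_⟩
    ext i
    fin_cases i
    · simp [h0] at h ⊢
      tauto
    · simp [h1]
  · refine ⟨q 0 / p 0, ?_⟩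
    ext i
    fin_cases i
    · simp [h0]
    · simp
      field_simp
      linear_combination h

lemma Par.symmetric {p q : Fin 2 → ℂ} (h : Par p q) : Par q p := by
  unfold Par at *
  linear_combination -h

lemma Par.reflexive {p : Fin 2 → ℂ} : Par p p := by
  unfold Par
  ring

lemma Par.transitive {p q r : Fin 2 → ℂ} (hq : q ≠ 0) (h : Par p q) (h' : Par q r) : Par p r := by
  obtain ⟨k, rfl⟩ := h.symmetric.smul hq
  obtain ⟨l, rfl⟩ := h'.smul hq
  simp [Par]
  ring

lemma rank_one_form (M : Matrix (Fin 2) (Fin 2) ℂ) (h : M.det = 0) :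
    ∃ (c : ℂ) (a b : Fin 2 → ℂ), a ≠ 0 ∧ b ≠ 0 ∧ ∀ i j, M i j = c * a i * b j := by
  by_cases hM : M = 0
  · refine ⟨0, fun _ => 1, fun _ => 1, ?_, ?_, ?_⟩
    · intro h; simpa using congrFun h 0
    · intro h; simpa using congrFun h 0
    · simp [hM]
  · obtain ⟨i, j, hij⟩ : ∃ i j, M i j ≠ 0 := by
      by_contra! hc
      exact hM (by ext i j; simp [hc])
    rw [Matrix.det_fin_two] at h
    refine ⟨(M i j)⁻¹, fun k => M k j, fun k => M i k,
      fun h => hij (congrFun h i), fun h => hij (congrFun h j), ?_⟩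
    intro k l
    field_simp
    fin_cases i <;> fin_cases j <;> fin_cases k <;> fin_cases l <;> simp <;>
      first | ring1 | linear_combination h | linear_combination -h

lemma pair_par (M N : Matrix (Fin 2) (Fin 2) ℂ) (h : (M + N).det = 0) {c d : ℂ}
    {a b a' b' : Fin 2 → ℂ}
    (hM : ∀ i j, M i j = c * a i * b j) (hN : ∀ i j, N i j = d * a' i * b' j) :
    c = 0 ∨ d = 0 ∨ Par a a' ∨ Par b b' := by
  have : c * (d * ((a 0 * a' 1 - a 1 * a' 0) * (b 0 * b' 1 - b 1 * b' 0))) = 0 := by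
    rw [Matrix.det_fin_two] at h
    simp only [Matrix.add_apply, hM, hN] at h
    linear_combination h
  simpa [sub_eq_zero, Par] using this

lemma range_le (M : Matrix (Fin 2) (Fin 2) ℂ) {c : ℂ} {a b u : Fin 2 → ℂ}
    (hM : ∀ i j, M i j = c * a i * b j) (hu : u ≠ 0) (h : c = 0 ∨ Par u a) :
    LinearMap.range M.mulVecLin ≤ Submodule.span ℂ {u} := by
  rintro _ ⟨v, rfl⟩
  rw [Submodule.mem_span_singleton]
  rcases h with rfl | h
  · refine ⟨0, ?_⟩
    ext i
    simp [Matrix.mulVec, dotProduct, hM]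
  · obtain ⟨k, rfl⟩ := h.smul hu
    refine ⟨c * k * (b 0 * v 0 + b 1 * v 1), ?_⟩
    ext i
    simp [Matrix.mulVec, dotProduct, hM]
    ring

lemma ker_of_par (M : Matrix (Fin 2) (Fin 2) ℂ) {c : ℂ} {a b w : Fin 2 → ℂ}
    (hM : ∀ i j, M i j = c * a i * b j) (h : c = 0 ∨ Par w b) :
    M.mulVec ![w 1, -w 0] = 0 := by
  ext i
  simp [Matrix.mulVec, dotProduct, hM]
  rcases h with rfl | h
  · simp
  · unfold Par at h
    linear_combination (-c * a i) * h

/-- If every linear combination of three 2×2 complex matrices is singular, then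
either they have a common nonzero kernel vector, or there is a one-dimensional
subspace of `ℂ²` containing `range Y₁ + range Y₂ + range Y₃`. -/
theorem singular_net_common_kernel_or_image_line
    (Y₁ Y₂ Y₃ : Matrix (Fin 2) (Fin 2) ℂ)
    (h : ∀ l₁ l₂ l₃ : ℂ, (l₁ • Y₁ + l₂ • Y₂ + l₃ • Y₃).det = 0) :
    (∃ v : Fin 2 → ℂ, v ≠ 0 ∧ Y₁.mulVec v = 0 ∧ Y₂.mulVec v = 0 ∧ Y₃.mulVec v = 0) ∨
    (∃ L : Submodule ℂ (Fin 2 → ℂ), Module.finrank ℂ L = 1 ∧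
      LinearMap.range Y₁.mulVecLin ⊔ LinearMap.range Y₂.mulVecLin ⊔
        LinearMap.range Y₃.mulVecLin ≤ L) := by
  obtain ⟨c₁, a₁, b₁, ha₁, hb₁, h₁⟩ := rank_one_form Y₁ (by simpa using h 1 0 0)
  obtain ⟨c₂, a₂, b₂, ha₂, hb₂, h₂⟩ := rank_one_form Y₂ (by simpa using h 0 1 0)
  obtain ⟨c₃, a₃, b₃, ha₃, hb₃, h₃⟩ := rank_one_form Y₃ (by simpa using h 0 0 1)
  have h12 := pair_par Y₁ Y₂ (by simpa using h 1 1 0) h₁ h₂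
  have h13 := pair_par Y₁ Y₃ (by simpa using h 1 0 1) h₁ h₃
  have h23 := pair_par Y₂ Y₃ (by simpa using h 0 1 1) h₂ h₃
  have key : (∃ w : Fin 2 → ℂ, w ≠ 0 ∧ (c₁ = 0 ∨ Par w b₁) ∧ (c₂ = 0 ∨ Par w b₂) ∧
        (c₃ = 0 ∨ Par w b₃)) ∨
      (∃ u : Fin 2 → ℂ, u ≠ 0 ∧ (c₁ = 0 ∨ Par u a₁) ∧ (c₂ = 0 ∨ Par u a₂) ∧
        (c₃ = 0 ∨ Par u a₃)) := by
    have r : ∀ p, Par p p := fun p => Par.reflexive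
    by_cases e1 : c₁ = 0
    · by_cases e2 : c₂ = 0
      · exact Or.inl ⟨b₃, hb₃, Or.inl e1, Or.inl e2, Or.inr (r _)⟩
      by_cases e3 : c₃ = 0
      · exact Or.inl ⟨b₂, hb₂, Or.inl e1, Or.inr (r _), Or.inl e3⟩
      rcases h23 with h | h | h | h
      · exact absurd h e2
      · exact absurd h e3
      · exact Or.inr ⟨a₂, ha₂, Or.inl e1, Or.inr (r _), Or.inr h⟩
      · exact Or.inl ⟨b₂, hb₂, Or.inl e1, Or.inr (r _), Or.inr h⟩
    have A : c₂ = 0 ∨ Par a₁ a₂ ∨ Par b₁ b₂ := h12.resolve_left e1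
    have B : c₃ = 0 ∨ Par a₁ a₃ ∨ Par b₁ b₃ := h13.resolve_left e1
    have L : (c₂ = 0 ∨ Par b₁ b₂) → (c₃ = 0 ∨ Par b₁ b₃) → _ := fun x y =>
      (⟨b₁, hb₁, Or.inr (r _), x, y⟩ : ∃ w : Fin 2 → ℂ, w ≠ 0 ∧ (c₁ = 0 ∨ Par w b₁) ∧
        (c₂ = 0 ∨ Par w b₂) ∧ (c₃ = 0 ∨ Par w b₃))
    have R : (c₂ = 0 ∨ Par a₁ a₂) → (c₃ = 0 ∨ Par a₁ a₃) → _ := fun x y =>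
      (⟨a₁, ha₁, Or.inr (r _), x, y⟩ : ∃ w : Fin 2 → ℂ, w ≠ 0 ∧ (c₁ = 0 ∨ Par w a₁) ∧
        (c₂ = 0 ∨ Par w a₂) ∧ (c₃ = 0 ∨ Par w a₃))
    have t1 : Par a₁ a₂ → Par a₂ a₃ → Par a₁ a₃ := Par.transitive ha₂
    have t2 : Par b₁ b₂ → Par b₂ b₃ → Par b₁ b₃ := Par.transitive hb₂
    have t3 : Par a₁ a₃ → Par a₂ a₃ → Par a₁ a₂ := fun x y => Par.transitive ha₃ x y.symmetric
    have t4 : Par b₁ b₃ → Par b₂ b₃ → Par b₁ b₂ := fun x y => Par.transitive hb₃ x y.symmetric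
    rcases A with x | x | x <;> rcases B with y | y | y
    · exact Or.inl (L (Or.inl x) (Or.inl y))
    · exact Or.inr (R (Or.inl x) (Or.inr y))
    · exact Or.inl (L (Or.inl x) (Or.inr y))
    · exact Or.inr (R (Or.inr x) (Or.inl y))
    · exact Or.inr (R (Or.inr x) (Or.inr y))
    · rcases h23 with z | z | z | z
      · exact Or.inl (L (Or.inl z) (Or.inr y))
      · exact Or.inr (R (Or.inr x) (Or.inl z))
      · exact Or.inr (R (Or.inr x) (Or.inr (t1 x z)))
      · exact Or.inl (L (Or.inr (t4 y z)) (Or.inr y))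
    · exact Or.inl (L (Or.inr x) (Or.inl y))
    · rcases h23 with z | z | z | z
      · exact Or.inr (R (Or.inl z) (Or.inr y))
      · exact Or.inl (L (Or.inr x) (Or.inl z))
      · exact Or.inr (R (Or.inr (t3 y z)) (Or.inr y))
      · exact Or.inl (L (Or.inr x) (Or.inr (t2 x z)))
    · exact Or.inl (L (Or.inr x) (Or.inr y))
  rcases key with ⟨w, hw, k1, k2, k3⟩ | ⟨u, hu, k1, k2, k3⟩
  · refine Or.inl ⟨![w 1, -w 0], ?_, ker_of_par _ h₁ k1, ker_of_par _ h₂ k2, ker_of_par _ h₃ k3⟩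
    intro hv
    apply hw
    have e0 := congrFun hv 0
    have e1 := congrFun hv 1
    simp at e0 e1
    ext i
    fin_cases i <;> simp [e0, e1]
  · exact Or.inr ⟨Submodule.span ℂ {u}, finrank_span_singleton hu,
      sup_le (sup_le (range_le _ h₁ hu k1) (range_le _ h₂ hu k2)) (range_le _ h₃ hu k3)⟩
end
end

section
/- A representation (Y₁, Y₂, Y₃) of the Kronecker quiver Q₃ with dimension vector (2,2) is Θ-semistable for Θ = (−1, 1) if and only if there exists (λ₁, λ₂, λ₃) ∈ ℂ³ with det(λ₁Y₁ + λ₂Y₂ + λ₃Y₃) ≠ 0. (The concrete criterion for GIT-semistability underlying Proposition 2.8: a point of the representation space is semistable exactly when some Θ-semi-invariant of positive weight does not vanish on it.) -/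
open Matrix

noncomputable section

/-- The underlying vector space `ℂ²`. -/
abbrev V2 : Type := Fin 2 → ℂ

/-- A representation of the Kronecker quiver `Q₃` with dimension vector `(2,2)`
is a triple of 2×2 complex matrices, acting on `ℂ²`. A pair of subspaces
`(W₁, W₂)` is a subrepresentation if `Yᵢ(W₁) ⊆ W₂` for all `i`. The
representation is `Θ`-semistable for `Θ = (-1,1)` if `-dim W₁ + dim W₂ ≥ 0`
for every subrepresentation `(W₁, W₂)`. -/
def ThetaSemistable (Y : Fin 3 → M2) : Prop :=
  ∀ W₁ W₂ : Submodule ℂ V2, (∀ i, W₁.map (Y i).mulVecLin ≤ W₂) →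
    (0 : ℤ) ≤ -(Module.finrank ℂ W₁ : ℤ) + (Module.finrank ℂ W₂ : ℤ)

/-- A singular matrix is a product `u vᵀ`, with `u = 0` iff `v = 0`. -/
lemma rank_one_decomp (p q r s : ℂ) (h : p * s - q * r = 0) :
    ∃ a b c d : ℂ, p = a * c ∧ q = a * d ∧ r = b * c ∧ s = b * d ∧
      ((a = 0 ∧ b = 0) ↔ (c = 0 ∧ d = 0)) := by
  by_cases hp : p = 0
  · by_cases hq : q = 0
    · by_cases hz : r = 0 ∧ s = 0
      · exact ⟨0, 0, 0, 0, by simp [hp, hq, hz]⟩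
      · exact ⟨0, 1, r, s, by simp [hp], by simp [hq], by simp, by simp, by simp [hz]⟩
    · refine ⟨1, s / q, p, q, by simp, by simp, ?_, by field_simp, by simp [hq]⟩
      field_simp
      linear_combination -h
  · refine ⟨1, r / p, p, q, by simp, by simp, by field_simp, ?_, by simp [hp]⟩
    field_simp
    linear_combination h

/-- Three pairwise parallel vectors in the plane have a common nonzero orthogonal vector. -/
lemma common_perp (a b c d e f : ℂ) (h1 : a * d - b * c = 0) (h2 : a * f - b * e = 0)
    (h3 : c * f - d * e = 0) :
    ∃ x y : ℂ, ¬ (x = 0 ∧ y = 0) ∧ a * x + b * y = 0 ∧ c * x + d * y = 0 ∧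
      e * x + f * y = 0 := by
  by_cases ha : a = 0 ∧ b = 0
  · by_cases hc : c = 0 ∧ d = 0
    · by_cases he : e = 0 ∧ f = 0
      · exact ⟨1, 0, by simp, by simp [ha], by simp [hc], by simp [he]⟩
      · exact ⟨f, -e, by simpa [and_comm] using he, by simp [ha], by simp [hc], by ring⟩
    · exact ⟨d, -c, by simpa [and_comm] using hc, by simp [ha], by ring,
        by linear_combination -h3⟩
  · exact ⟨b, -a, by simpa [and_comm] using ha, by ring, by linear_combination -h1,
        by linear_combination -h2⟩

/-- If two wedges with a common vector vanish and the vector is nonzero, so does the third. -/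
lemma wedge_trans (a b c d e f : ℂ) (hc : ¬ (a = 0 ∧ b = 0)) (h1 : a * d - b * c = 0)
    (h2 : a * f - b * e = 0) : c * f - d * e = 0 := by
  by_cases ha : a = 0
  · have hb : b ≠ 0 := fun hb => hc ⟨ha, hb⟩
    apply mul_left_cancel₀ hb
    linear_combination d * h2 - f * h1
  · apply mul_left_cancel₀ ha
    linear_combination c * h2 - e * h1

lemma wedge_zero (a b c d e f : ℂ) (a' b' c' d' e' f' : ℂ)
    (ha : (a = 0 ∧ b = 0) ↔ (a' = 0 ∧ b' = 0))
    (hc : (c = 0 ∧ d = 0) ↔ (c' = 0 ∧ d' = 0))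
    (he : (e = 0 ∧ f = 0) ↔ (e' = 0 ∧ f' = 0))
    (h1 : a * d - b * c = 0 ∨ a' * d' - b' * c' = 0)
    (h2 : a * f - b * e = 0 ∨ a' * f' - b' * e' = 0)
    (h3 : c * f - d * e = 0 ∨ c' * f' - d' * e' = 0) :
    (a * d - b * c = 0 ∧ a * f - b * e = 0 ∧ c * f - d * e = 0) ∨
    (a' * d' - b' * c' = 0 ∧ a' * f' - b' * e' = 0 ∧ c' * f' - d' * e' = 0) := by
  have A := wedge_trans a b c d e f
  have B := wedge_trans c d a b e f
  have C := wedge_trans e f a b c d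
  have A' := wedge_trans a' b' c' d' e' f'
  have B' := wedge_trans c' d' a' b' e' f'
  have C' := wedge_trans e' f' a' b' c' d'
  grind

/-- A space of singular matrices has a common kernel or a common left kernel. -/
lemma common_kernel (Y : Fin 3 → M2)
    (h : ∀ l₁ l₂ l₃ : ℂ, (l₁ • Y 0 + l₂ • Y 1 + l₃ • Y 2).det = 0) :
    ∃ x y : ℂ, ¬ (x = 0 ∧ y = 0) ∧
      ((∀ i j, Y i j 0 * x + Y i j 1 * y = 0) ∨ (∀ i j, Y i 0 j * x + Y i 1 j * y = 0)) := by
  simp only [Matrix.det_fin_two, Matrix.add_apply, Matrix.smul_apply, smul_eq_mul] at h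
  obtain ⟨a, b, a', b', p1, p2, p3, p4, ha⟩ := rank_one_decomp (Y 0 0 0) (Y 0 0 1) (Y 0 1 0)
    (Y 0 1 1) (by linear_combination h 1 0 0)
  obtain ⟨c, d, c', d', q1, q2, q3, q4, hc⟩ := rank_one_decomp (Y 1 0 0) (Y 1 0 1) (Y 1 1 0)
    (Y 1 1 1) (by linear_combination h 0 1 0)
  obtain ⟨e, f, e', f', r1, r2, r3, r4, he⟩ := rank_one_decomp (Y 2 0 0) (Y 2 0 1) (Y 2 1 0)
    (Y 2 1 1) (by linear_combination h 0 0 1)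
  rw [p1, p2, p3, p4, q1, q2, q3, q4, r1, r2, r3, r4] at h
  rcases wedge_zero a b c d e f a' b' c' d' e' f' ha hc he
    (mul_eq_zero.1 (by linear_combination h 1 1 0))
    (mul_eq_zero.1 (by linear_combination h 1 0 1))
    (mul_eq_zero.1 (by linear_combination h 0 1 1)) with ⟨h1, h2, h3⟩ | ⟨h1, h2, h3⟩
  · obtain ⟨x, y, hxy, e1, e2, e3⟩ := common_perp _ _ _ _ _ _ h1 h2 h3
    refine ⟨x, y, hxy, Or.inr ?_⟩
    intro i j
    fin_cases i <;> fin_cases j <;> simp [*] <;> grind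
  · obtain ⟨x, y, hxy, e1, e2, e3⟩ := common_perp _ _ _ _ _ _ h1 h2 h3
    refine ⟨x, y, hxy, Or.inl ?_⟩
    intro i j
    fin_cases i <;> fin_cases j <;> simp [*] <;> grind

/-- A representation `(Y₁, Y₂, Y₃)` of `Q₃` with dimension vector `(2,2)` is
`Θ`-semistable for `Θ = (-1,1)` if and only if some linear combination
`λ₁Y₁ + λ₂Y₂ + λ₃Y₃` has nonzero determinant. -/
theorem thetaSemistable_iff_det_ne_zero (Y : Fin 3 → M2) :
    ThetaSemistable Y ↔
      ∃ l₁ l₂ l₃ : ℂ, (l₁ • Y 0 + l₂ • Y 1 + l₃ • Y 2).det ≠ 0 := by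
  constructor
  · intro hs
    by_contra! hd
    obtain ⟨x, y, hxy, hk | hk⟩ := common_kernel Y hd
    · have hv : (![x, y] : V2) ≠ 0 := by
        intro h0
        exact hxy ⟨by simpa using congrFun h0 0, by simpa using congrFun h0 1⟩
      have := hs (Submodule.span ℂ {![x, y]}) ⊥ (by
        intro i
        rw [Submodule.map_span_le]
        rintro m rfl
        rw [Submodule.mem_bot]
        ext j
        simpa [Matrix.mulVec, dotProduct, Fin.sum_univ_two] using hk i j)
      rw [finrank_span_singleton hv] at this
      simp at this
    · let w : V2 →ₗ[ℂ] ℂ := x • LinearMap.proj 0 + y • LinearMap.proj 1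
      have := hs ⊤ (LinearMap.ker w) (by
        intro i
        rintro _ ⟨v, -, rfl⟩
        rw [LinearMap.mem_ker]
        simp only [w, Matrix.mulVec, dotProduct, Fin.sum_univ_two, LinearMap.add_apply,
          LinearMap.smul_apply, LinearMap.proj_apply, smul_eq_mul, Matrix.mulVecLin_apply]
        linear_combination v 0 * hk i 0 + v 1 * hk i 1)
      have hlt : Module.finrank ℂ (LinearMap.ker w) < Module.finrank ℂ V2 := by
        apply Submodule.finrank_lt
        intro ht
        rw [LinearMap.ker_eq_top] at ht
        exact hxy ⟨by simpa [w] using LinearMap.congr_fun ht ![1, 0],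
          by simpa [w] using LinearMap.congr_fun ht ![0, 1]⟩
      rw [finrank_top] at this
      omega
  · rintro ⟨l₁, l₂, l₃, hd⟩ W₁ W₂ hW
    set M : M2 := l₁ • Y 0 + l₂ • Y 1 + l₃ • Y 2 with hM
    have hinj : Function.Injective M.mulVecLin :=
      Matrix.mulVec_injective_iff_isUnit.2
        ((Matrix.isUnit_iff_isUnit_det _).2 (isUnit_iff_ne_zero.2 hd))
    have hle : W₁.map M.mulVecLin ≤ W₂ := by
      rintro _ ⟨v, hv, rfl⟩
      have hm : ∀ i, (Y i) *ᵥ v ∈ W₂ := fun i => hW i ⟨v, hv, rfl⟩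
      rw [Matrix.mulVecLin_apply, hM, Matrix.add_mulVec, Matrix.add_mulVec, Matrix.smul_mulVec,
        Matrix.smul_mulVec, Matrix.smul_mulVec]
      exact W₂.add_mem (W₂.add_mem (W₂.smul_mem _ (hm 0)) (W₂.smul_mem _ (hm 1)))
        (W₂.smul_mem _ (hm 2))
    have h1 := Submodule.finrank_mono hle
    rw [(Submodule.equivMapOfInjective _ hinj W₁).finrank_eq.symm] at h1
    have h2 : (0 : ℤ) ≤ -(Module.finrank ℂ W₁ : ℤ) + (Module.finrank ℂ W₂ : ℤ) := by
      have h3 : Module.finrank ℂ W₁ ≤ Module.finrank ℂ W₂ := h1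
      omega
    exact h2
end
end

section
/- For every (q₁, q₂, q₃, q₄, q₅, q₆) ∈ ℂ⁶ there exists a triple (Y₁, Y₂, Y₃) of 2×2 complex matrices with D₁(Y) = q₁, D₂(Y) = q₂, D₃(Y) = q₃, P₁₂(Y) = q₄, P₁₃(Y) = q₅ and P₂₃(Y) = q₆; that is, the map (M₂(ℂ))³ → ℂ⁶ given by the six semi-invariants is surjective. (The surjectivity onto ℙ⁵ of the quotient map of the semistable locus in Proposition 2.8.) -/
open Matrix

noncomputable section

lemma quad_solvable (A B C : ℂ) (h : A ≠ 0 ∨ B ≠ 0) : ∃ x : ℂ, A * x ^ 2 + B * x + C = 0 := by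
  by_cases hA : A = 0
  · have hB : B ≠ 0 := by tauto
    refine ⟨-C / B, ?_⟩
    subst hA
    field_simp
    ring
  · obtain ⟨s, hs⟩ := IsAlgClosed.exists_pow_nat_eq (discrim A B C) (n := 2) (by norm_num)
    obtain ⟨x, hx⟩ := exists_quadratic_eq_zero hA ⟨s, by rw [← hs]; ring⟩
    exact ⟨x, by rw [← hx]; ring⟩

lemma key (q₁ q₂ q₃ q₄ q₅ q₆ : ℂ) (h : ¬ (q₁ = 0 ∧ q₂ = 0 ∧ q₄ = 0 ∧ q₅ = 0 ∧ q₆ = 0)) :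
    ∃ a c : ℂ, a * q₅ - q₁ * a ^ 2 - q₄ * a * c - q₂ * c ^ 2 + q₆ * c = q₃ := by
  by_cases h1 : q₁ ≠ 0 ∨ q₅ ≠ 0
  · obtain ⟨x, hx⟩ := quad_solvable q₁ (-q₅) q₃ (by simpa using h1)
    exact ⟨x, 0, by linear_combination -hx⟩
  by_cases h2 : q₂ ≠ 0 ∨ q₆ ≠ 0
  · obtain ⟨x, hx⟩ := quad_solvable q₂ (-q₆) q₃ (by simpa using h2)
    exact ⟨0, x, by linear_combination -hx⟩
  push Not at h1 h2
  obtain ⟨rfl, rfl⟩ := h1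
  obtain ⟨rfl, rfl⟩ := h2
  have h4 : q₄ ≠ 0 := by tauto
  refine ⟨1, -q₃ / q₄, ?_⟩
  field_simp
  ring

/-- The map `(M₂(ℂ))³ → ℂ⁶` given by the six semi-invariants
`D₁, D₂, D₃, P₁₂, P₁₃, P₂₃` is surjective: every prescribed 6-tuple of values
is attained by some triple of 2×2 complex matrices. -/
theorem sixInvariants_surjective (q₁ q₂ q₃ q₄ q₅ q₆ : ℂ) :
    ∃ Y₁ Y₂ Y₃ : M2,
      Y₁.det = q₁ ∧ Y₂.det = q₂ ∧ Y₃.det = q₃ ∧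
      (Y₁ + Y₂).det - Y₁.det - Y₂.det = q₄ ∧
      (Y₁ + Y₃).det - Y₁.det - Y₃.det = q₅ ∧
      (Y₂ + Y₃).det - Y₂.det - Y₃.det = q₆ := by
  by_cases h : q₁ = 0 ∧ q₂ = 0 ∧ q₄ = 0 ∧ q₅ = 0 ∧ q₆ = 0
  · obtain ⟨rfl, rfl, rfl, rfl, rfl⟩ := h
    refine ⟨0, 0, !![1, 0; 0, q₃], ?_⟩
    simp [Matrix.det_fin_two]
  · obtain ⟨a, c, hac⟩ := key q₁ q₂ q₃ q₄ q₅ q₆ h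
    refine ⟨!![1, 0; 0, q₁], !![0, -q₂; 1, q₄],
      !![a, a * q₄ + q₂ * c - q₆; c, q₅ - q₁ * a], ?_, ?_, ?_, ?_, ?_, ?_⟩ <;>
    simp only [Matrix.det_fin_two, Matrix.add_apply, Matrix.of_apply, Matrix.cons_val',
      Matrix.cons_val_zero, Matrix.cons_val_one, Matrix.cons_val_fin_one]
    · ring
    · ring
    · linear_combination hac
    · ring
    · ring
    · ring
end
end

section
/- If a representation (Y₁, Y₂, Y₃) of the Kronecker quiver Q₃ with dimension vector (2,2) is Θ-semistable but not Θ-stable for Θ = (−1, 1), then it admits a subrepresentation (W₁, W₂) with dim W₁ = dim W₂ = 1, and consequently there exist g₁, g₂ ∈ GL₂(ℂ) such that g₂Yᵢg₁⁻¹ is upper triangular for each i = 1, 2, 3. (The strictly semistable analysis used in Corollary 4.3 and in the Lemma of Section 5.) -/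
open Matrix

noncomputable section

/-- `Θ`-stability (`Θ = (-1,1)`): `-dim W₁ + dim W₂ > 0` for every
subrepresentation other than `(0,0)` and `(ℂ²,ℂ²)`. -/
def ThetaStable (Y : Fin 3 → M2) : Prop :=
  ∀ W₁ W₂ : Submodule ℂ V2, (∀ i, W₁.map (Y i).mulVecLin ≤ W₂) →
    ¬(W₁ = ⊥ ∧ W₂ = ⊥) → ¬(W₁ = ⊤ ∧ W₂ = ⊤) →
    (0 : ℤ) < -(Module.finrank ℂ W₁ : ℤ) + (Module.finrank ℂ W₂ : ℤ)

/-- A strictly `Θ`-semistable representation of `Q₃` with dimension vector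
`(2,2)` admits a subrepresentation of dimension vector `(1,1)`, and consequently
can be brought into simultaneous upper triangular form by the
`GL₂(ℂ) × GL₂(ℂ)` action. -/
theorem strictly_semistable_upper_triangular (Y : Fin 3 → M2)
    (hss : ThetaSemistable Y) (hns : ¬ThetaStable Y) :
    (∃ W₁ W₂ : Submodule ℂ V2, (∀ i, W₁.map (Y i).mulVecLin ≤ W₂) ∧
      Module.finrank ℂ W₁ = 1 ∧ Module.finrank ℂ W₂ = 1) ∧
    (∃ g₁ g₂ : M2, IsUnit g₁.det ∧ IsUnit g₂.det ∧
      ∀ i : Fin 3, (g₂ * Y i * g₁⁻¹) 1 0 = 0) := by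
  have key : ∃ W₁ W₂ : Submodule ℂ V2, (∀ i, W₁.map (Y i).mulVecLin ≤ W₂) ∧
      Module.finrank ℂ W₁ = 1 ∧ Module.finrank ℂ W₂ = 1 := by
    unfold ThetaStable at hns
    push Not at hns
    obtain ⟨W₁, W₂, hW, h0, h1, hle⟩ := hns
    have hge := hss W₁ W₂ hW
    have hV : Module.finrank ℂ V2 = 2 := by simp
    have l1 : Module.finrank ℂ W₁ ≤ 2 := (Submodule.finrank_le W₁).trans hV.le
    have heq : Module.finrank ℂ W₁ = Module.finrank ℂ W₂ := by omega
    refine ⟨W₁, W₂, hW, ?_, ?_⟩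
    all_goals
      have n0 : Module.finrank ℂ W₁ ≠ 0 := fun h =>
        h0 (Submodule.finrank_eq_zero.mp h) (Submodule.finrank_eq_zero.mp (heq ▸ h))
      have n2 : Module.finrank ℂ W₁ ≠ 2 := fun h =>
        h1 (Submodule.eq_top_of_finrank_eq (h.trans hV.symm))
          (Submodule.eq_top_of_finrank_eq ((heq ▸ h).trans hV.symm))
      omega
  refine ⟨key, ?_⟩
  obtain ⟨W₁, W₂, hW, d1, d2⟩ := key
  obtain ⟨v, hv0, -⟩ := finrank_eq_one_iff'.mp d1
  obtain ⟨w, hw0, hw⟩ := finrank_eq_one_iff'.mp d2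
  have compl : ∀ u : V2, u ≠ 0 → ∃ a b : ℂ, u 0 * b - u 1 * a ≠ 0 := by
    intro u hu
    by_cases h : u 0 = 0
    · refine ⟨1, 0, fun h' => hu ?_⟩
      ext j
      fin_cases j
      · simpa using h
      · simpa using h'
    · exact ⟨0, 1, by simpa using h⟩
  obtain ⟨a, b, hab⟩ := compl v (by simpa using hv0)
  obtain ⟨c, d, hcd⟩ := compl w (by simpa using hw0)
  have hP : IsUnit (!![(v : V2) 0, a; (v : V2) 1, b] : M2).det := by
    rw [isUnit_iff_ne_zero, Matrix.det_fin_two_of]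
    intro h
    apply hab
    linear_combination h
  refine ⟨(!![(v : V2) 0, a; (v : V2) 1, b] : M2)⁻¹,
    !![d, -c; -(w : V2) 1, (w : V2) 0], ?_, ?_, ?_⟩
  · exact Matrix.isUnit_nonsing_inv_det _ hP
  · rw [isUnit_iff_ne_zero, Matrix.det_fin_two_of]
    intro h
    apply hcd
    linear_combination h
  · intro i
    rw [Matrix.nonsing_inv_nonsing_inv _ hP]
    have hm : (Y i).mulVecLin (v : V2) ∈ W₂ := hW i (Submodule.mem_map_of_mem v.2)
    obtain ⟨k, hk⟩ := hw ⟨_, hm⟩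
    have hk' : k • (w : V2) = (Y i) *ᵥ (v : V2) := congrArg Subtype.val hk
    have e0 := congrFun hk' 0
    have e1 := congrFun hk' 1
    simp [Matrix.mulVec, dotProduct, Fin.sum_univ_two] at e0 e1
    simp [Matrix.mul_apply, Matrix.vecMul, dotProduct, Fin.sum_univ_two]
    linear_combination (w : V2) 1 * e0 - (w : V2) 0 * e1
end
end

section
/- Let (Y₁, Y₂, Y₃) be a representation of the Kronecker quiver Q₃ with dimension vector (2,2) that is Θ-semistable but not Θ-stable for Θ = (−1, 1). Then the closure of its GL₂(ℂ) × GL₂(ℂ)-orbit in (M₂(ℂ))³ (standard topology) contains a triple of diagonal matrices (diag(a₁, d₁), diag(a₂, d₂), diag(a₃, d₃)) with (a₁, a₂, a₃) ≠ (0,0,0) and (d₁, d₂, d₃) ≠ (0,0,0); that is, every strictly semistable representation degenerates to a direct sum of two nonzero representations of dimension vector (1,1). (The Lemma of Section 5 in representation-theoretic terms.) -/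
open Matrix

noncomputable section

/-- A nonzero vector is the first column of an invertible matrix. -/
theorem exists_frame (v : V2) (hv : v ≠ 0) :
    ∃ P : M2, IsUnit P.det ∧ P *ᵥ ![1, 0] = v := by
  by_cases h : v 0 = 0
  · have h1 : v 1 ≠ 0 := by
      intro h1
      apply hv
      ext i
      fin_cases i <;> simp [h, h1]
    refine ⟨!![v 0, 1; v 1, 0], ?_, ?_⟩
    · simp [Matrix.det_fin_two, h1]
    · ext i
      fin_cases i <;> simp [Matrix.mulVec, dotProduct]
  · refine ⟨!![v 0, 0; v 1, 1], ?_, ?_⟩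
    · simp [Matrix.det_fin_two, h]
    · ext i
      fin_cases i <;> simp [Matrix.mulVec, dotProduct]

/-- Strict semistability yields a one-dimensional subrepresentation. -/
theorem exists_line (Y : Fin 3 → M2) (hss : ThetaSemistable Y) (hns : ¬ThetaStable Y) :
    ∃ v w : V2, v ≠ 0 ∧ w ≠ 0 ∧ ∀ i, ∃ c : ℂ, Y i *ᵥ v = c • w := by
  unfold ThetaStable at hns
  push Not at hns
  obtain ⟨W₁, W₂, hW, hb, ht, hle⟩ := hns
  have h0 := hss W₁ W₂ hW
  have heq : Module.finrank ℂ W₁ = Module.finrank ℂ W₂ := by omega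
  have h2 : Module.finrank ℂ V2 = 2 := by simp
  have hle2 : Module.finrank ℂ W₁ ≤ 2 := (Submodule.finrank_le W₁).trans h2.le
  have hn0 : Module.finrank ℂ W₁ ≠ 0 := by
    intro h
    exact hb (Submodule.finrank_eq_zero.mp h) (Submodule.finrank_eq_zero.mp (heq ▸ h))
  have hn2 : Module.finrank ℂ W₁ ≠ 2 := by
    intro h
    exact ht (Submodule.eq_top_of_finrank_eq (h.trans h2.symm))
      (Submodule.eq_top_of_finrank_eq ((heq ▸ h).trans h2.symm))
  have h1 : Module.finrank ℂ W₁ = 1 := by omega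
  obtain ⟨v, hv, -⟩ := finrank_eq_one_iff'.mp h1
  obtain ⟨w, hw, hspan⟩ := finrank_eq_one_iff'.mp (heq ▸ h1)
  refine ⟨v, w, by simpa using hv, by simpa using hw, fun i => ?_⟩
  have hm : Y i *ᵥ (v : V2) ∈ W₂ := hW i ⟨v, v.2, rfl⟩
  obtain ⟨c, hc⟩ := hspan ⟨_, hm⟩
  exact ⟨c, by simpa using (congrArg Subtype.val hc).symm⟩

theorem torus_conj (t : ℂ) (ht : t ≠ 0) (Z : M2) (hZ : Z 1 0 = 0) :
    !![t, 0; 0, 1] * Z * !![t⁻¹, 0; 0, 1] = !![Z 0 0, t * Z 0 1; 0, Z 1 1] := by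
  ext i j
  fin_cases i <;> fin_cases j <;> simp [Matrix.mul_apply, Matrix.vecMul, dotProduct, Fin.sum_univ_two, hZ]
  field_simp

/-- The closure of the `GL₂(ℂ) × GL₂(ℂ)`-orbit of a strictly `Θ`-semistable
representation of `Q₃` with dimension vector `(2,2)` contains a triple of
diagonal matrices `(diag(a₁,d₁), diag(a₂,d₂), diag(a₃,d₃))` with
`(a₁,a₂,a₃) ≠ 0` and `(d₁,d₂,d₃) ≠ 0`: every strictly semistable representation
degenerates to a direct sum of two nonzero representations of dimension vector
`(1,1)`. -/
theorem strictly_semistable_degenerates (Y : Fin 3 → M2)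
    (hss : ThetaSemistable Y) (hns : ¬ThetaStable Y) :
    ∃ a d : Fin 3 → ℂ, a ≠ 0 ∧ d ≠ 0 ∧
      ((!![a 0, 0; 0, d 0], !![a 1, 0; 0, d 1], !![a 2, 0; 0, d 2]) :
          M2 × M2 × M2) ∈
        closure {p : M2 × M2 × M2 |
          ∃ g₁ g₂ : M2, IsUnit g₁.det ∧ IsUnit g₂.det ∧
            p = (g₂ * Y 0 * g₁⁻¹, g₂ * Y 1 * g₁⁻¹, g₂ * Y 2 * g₁⁻¹)} := by
  obtain ⟨v, w, hv, hw, hY⟩ := exists_line Y hss hns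
  obtain ⟨P, hP, hPv⟩ := exists_frame v hv
  obtain ⟨R, hR, hRw⟩ := exists_frame w hw
  obtain ⟨Z, hZdef⟩ : ∃ Z : Fin 3 → M2, ∀ i, Z i = R⁻¹ * Y i * P := ⟨_, fun _ => rfl⟩
  have hYZ : ∀ i, Y i * P = R * Z i := by
    intro i
    rw [hZdef, ← Matrix.mul_assoc, ← Matrix.mul_assoc, Matrix.mul_nonsing_inv _ hR,
      Matrix.one_mul]
  have hYx : ∀ i x, Y i *ᵥ x = R *ᵥ (Z i *ᵥ (P⁻¹ *ᵥ x)) := by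
    intro i x
    rw [Matrix.mulVec_mulVec, Matrix.mulVec_mulVec, ← hYZ, Matrix.mul_assoc,
      Matrix.mul_nonsing_inv _ hP, Matrix.mul_one]
  have hcol : ∀ i, ∃ c : ℂ, Z i *ᵥ ![1, 0] = c • ![1, 0] := by
    intro i
    obtain ⟨c, hc⟩ := hY i
    refine ⟨c, ?_⟩
    rw [hZdef, ← Matrix.mulVec_mulVec, hPv, ← Matrix.mulVec_mulVec, hc, ← hRw,
      Matrix.mulVec_smul, Matrix.mulVec_mulVec, Matrix.nonsing_inv_mul _ hR, Matrix.one_mulVec]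
  have hZ10 : ∀ i, Z i 1 0 = 0 := by
    intro i
    obtain ⟨c, hc⟩ := hcol i
    simpa [Matrix.mulVec, dotProduct] using congrFun hc 1
  refine ⟨fun i => Z i 0 0, fun i => Z i 1 1, ?_, ?_, ?_⟩
  · intro ha
    have h := hss (Submodule.span ℂ {v}) ⊥ (by
      intro i
      rw [Submodule.map_span_le]
      intro m hm
      rw [Set.mem_singleton_iff] at hm
      subst hm
      have h0 : Z i *ᵥ ![1, 0] = 0 := by
        ext k
        have := congrFun ha i
        fin_cases k
        · simpa [Matrix.mulVec, dotProduct] using this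
        · simpa [Matrix.mulVec, dotProduct] using hZ10 i
      rw [Submodule.mem_bot, Matrix.mulVecLin_apply, ← hPv, Matrix.mulVec_mulVec, hYZ,
        ← Matrix.mulVec_mulVec, h0, Matrix.mulVec_zero])
    rw [finrank_span_singleton hv, finrank_bot] at h
    norm_num at h
  · intro hd
    have h := hss ⊤ (Submodule.span ℂ {w}) (by
      rintro i _ ⟨x, -, rfl⟩
      rw [Matrix.mulVecLin_apply, hYx]
      obtain ⟨y, hy⟩ : ∃ y, y = P⁻¹ *ᵥ x := ⟨_, rfl⟩
      rw [← hy]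
      have h0 : Z i *ᵥ y = (Z i *ᵥ y) 0 • ![1, 0] := by
        ext k
        have := congrFun hd i
        fin_cases k
        · simp
        · have h1 : Z i 1 1 = 0 := this
          simp [Matrix.mulVec, dotProduct, hZ10 i, h1]
      rw [h0, Matrix.mulVec_smul, hRw]
      exact Submodule.smul_mem _ _ (Submodule.mem_span_singleton_self w))
    rw [finrank_span_singleton hw, finrank_top] at h
    simp at h
  · have hcont : Continuous (fun t : ℂ =>
        ((!![Z 0 0 0, t * Z 0 0 1; 0, Z 0 1 1], !![Z 1 0 0, t * Z 1 0 1; 0, Z 1 1 1],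
          !![Z 2 0 0, t * Z 2 0 1; 0, Z 2 1 1]) : M2 × M2 × M2)) := by
      have key : ∀ i, Continuous (fun t : ℂ =>
          (!![Z i 0 0, t * Z i 0 1; 0, Z i 1 1] : M2)) := by
        intro i
        refine continuous_matrix fun k l => ?_
        fin_cases k <;> fin_cases l <;> simp <;> fun_prop
      exact (key 0).prodMk ((key 1).prodMk (key 2))
    have hlim := (hcont.tendsto 0).mono_left (nhdsWithin_le_nhds (s := {0}ᶜ))
    simp only [zero_mul] at hlim
    refine mem_closure_of_tendsto hlim ?_
    filter_upwards [self_mem_nhdsWithin] with t ht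
    have ht0 : t ≠ 0 := ht
    have hdet : IsUnit (!![t, 0; 0, 1] : M2).det := by simp [Matrix.det_fin_two, ht0]
    have hinv : (!![t, 0; 0, 1] : M2)⁻¹ = !![t⁻¹, 0; 0, 1] := by
      apply Matrix.inv_eq_right_inv
      ext i j
      fin_cases i <;> fin_cases j <;> simp [Matrix.mul_apply, Fin.sum_univ_two, ht0]
    refine ⟨!![t, 0; 0, 1] * P⁻¹, !![t, 0; 0, 1] * R⁻¹, ?_, ?_, ?_⟩
    · rw [Matrix.det_mul]
      exact hdet.mul (Matrix.isUnit_nonsing_inv_det _ hP)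
    · rw [Matrix.det_mul]
      exact hdet.mul (Matrix.isUnit_nonsing_inv_det _ hR)
    · have key : ∀ i, !![Z i 0 0, t * Z i 0 1; 0, Z i 1 1] =
          !![t, 0; 0, 1] * R⁻¹ * Y i * (!![t, 0; 0, 1] * P⁻¹)⁻¹ := by
        intro i
        rw [← torus_conj t ht0 (Z i) (hZ10 i), hZdef, Matrix.mul_inv_rev, hinv,
          Matrix.nonsing_inv_nonsing_inv _ hP]
        simp only [Matrix.mul_assoc]
      rw [key 0, key 1, key 2]
end
end
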